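/- Let X be a countably infinite connected graph with standard weights and bounded vertex degree, let o ∈ X be fixed, and let G : X → (0,∞) satisfy: ΔG(x) ≥ 0 for all x ∈ X, ΔG(x) = 0 for all x ≠ o, and G is proper as a map to (0,∞). Define w(x) := Δ(G^{1/2})(x) / G(x)^{1/2}. Then w ≥ 0, for every finitely supported φ : X → ℝ one has Σ_{x,y∈X, x∼y} (φ(x) − φ(y))² ≥ Σ_{x∈X} w(x)·φ(x)² (the left-hand sum runs over ordered pairs of adjacent vertices), and for every x ≠ o one has w(x) = (1/(2G(x))) · Σ_{y∼x} (G(x)^{1/2} − G(y)^{1/2})². -/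

import Mathlib

/-!
For any `u > 0` and finitely supported `φ`, Green's formula with the test function `φ² / u` combines
with Picone's identity on each edge to give the ground state representation
`∑ (φ x - φ y)² = 2 ∑ (Δu / u) φ² + ∑ u x * u y * (φ x / u x - φ y / u y)²`,
where the edge sums run over ordered pairs. Dropping the last sum leaves a Hardy inequality with
weight `2 Δu / u`, whatever the sign of `Δu`. For `u = √G` the product rule
`2 u Δu = Δ(u²) + |∇u|²` shows that `Δu / u` is nonnegative where `G` is superharmonic and equals
`|∇√G|² / (2 G)` where `G` is harmonic.
-/

/-- The ordered pairs of adjacent vertices of a graph; each undirected edge occurs twice. -/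
abbrev OrientedEdge {X : Type*} (Adj : X → X → Prop) : Type _ :=
  {p : X × X // Adj p.1 p.2}

/-- The positive graph Laplacian for standard weights. The sum is over the subtype of neighbours, so
it has the junk value `0` if it diverges at a vertex of infinite degree. -/
noncomputable def graphLaplacian {X : Type*} (Adj : X → X → Prop) (u : X → ℝ) (x : X) : ℝ :=
  ∑' y : {y : X // Adj x y}, (u x - u y.val)

/-- The squared length `|∇u|²(x)` of the discrete gradient, which is twice the carré du champ
of `u`; it measures the failure of the chain rule for squares. -/
noncomputable def gradientSq {X : Type*} (Adj : X → X → Prop) (u : X → ℝ) (x : X) : ℝ :=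
  ∑' y : {y : X // Adj x y}, (u x - u y.val) ^ 2

/-- The Hardy weight `Δ(√G) / √G` obtained from a positive function `G` by the supersolution
construction. -/
noncomputable def hardyWeight {X : Type*} (Adj : X → X → Prop) (G : X → ℝ) (x : X) : ℝ :=
  graphLaplacian Adj (fun y => √(G y)) x / √(G x)

section HardyInequality

variable {X : Type*} {Adj : X → X → Prop}

theorem finite_orientedEdge_fst_mem (hlocfin : ∀ x, {y : X | Adj x y}.Finite) {S : Set X}
    (hS : S.Finite) : {e : OrientedEdge Adj | e.val.1 ∈ S}.Finite := by
  have hpairs : (S ×ˢ ⋃ x ∈ S, {y : X | Adj x y}).Finite :=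
    hS.prod (hS.biUnion fun x _ => hlocfin x)
  refine (hpairs.preimage Subtype.val_injective.injOn).subset fun e he => ?_
  exact ⟨he, Set.mem_biUnion he e.property⟩

/-- Reversal of the orientation of an edge, used to symmetrize sums over oriented edges. -/
def OrientedEdge.reverse (hsymm : ∀ x y, Adj x y → Adj y x) :
    OrientedEdge Adj ≃ OrientedEdge Adj :=
  (Equiv.prodComm X X).subtypeEquiv fun p => ⟨hsymm p.1 p.2, hsymm p.2 p.1⟩

theorem summable_orientedEdge_of_finite_support (hsymm : ∀ x y, Adj x y → Adj y x)
    (hlocfin : ∀ x, {y : X | Adj x y}.Finite) {φ : X → ℝ} (hφ : (Function.support φ).Finite)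
    {F : OrientedEdge Adj → ℝ} (hF : ∀ e, φ e.val.1 = 0 → φ e.val.2 = 0 → F e = 0) :
    Summable F := by
  have hfst : {e : OrientedEdge Adj | e.val.1 ∈ Function.support φ}.Finite :=
    finite_orientedEdge_fst_mem hlocfin hφ
  have hsnd : {e : OrientedEdge Adj | e.val.2 ∈ Function.support φ}.Finite :=
    hfst.preimage (f := OrientedEdge.reverse hsymm) (Equiv.injective _).injOn
  refine summable_of_hasFiniteSupport ((hfst.union hsnd).subset fun e he => ?_)
  by_contra hout
  obtain ⟨h1, h2⟩ := not_or.mp hout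
  exact he (hF e (Function.notMem_support.mp h1) (Function.notMem_support.mp h2))

theorem tsum_mul_graphLaplacian {f g : X → ℝ}
    (hfg : Summable fun e : OrientedEdge Adj => f e.val.1 * (g e.val.1 - g e.val.2)) :
    ∑' x, f x * graphLaplacian Adj g x =
      ∑' e : OrientedEdge Adj, f e.val.1 * (g e.val.1 - g e.val.2) := by
  let toEdge := (Equiv.subtypeProdEquivSigmaSubtype Adj).symm
  have hsigma := (toEdge.summable_iff.mpr hfg).tsum_sigma
  simp only [Function.comp_apply] at hsigma
  rw [← toEdge.tsum_eq, hsigma]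
  exact tsum_congr fun x => tsum_mul_left.symm

theorem green_formula (hsymm : ∀ x y, Adj x y → Adj y x)
    (hlocfin : ∀ x, {y : X | Adj x y}.Finite) {f : X → ℝ} (hf : (Function.support f).Finite)
    (g : X → ℝ) :
    2 * ∑' x, f x * graphLaplacian Adj g x =
      ∑' e : OrientedEdge Adj, (f e.val.1 - f e.val.2) * (g e.val.1 - g e.val.2) := by
  let F : OrientedEdge Adj → ℝ := fun e => f e.val.1 * (g e.val.1 - g e.val.2)
  let rev := OrientedEdge.reverse hsymm
  have hF : Summable F :=
    summable_orientedEdge_of_finite_support hsymm hlocfin hf fun e h1 _ => by simp [F, h1]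
  calc 2 * ∑' x, f x * graphLaplacian Adj g x
      = ∑' e, F e + ∑' e, F (rev e) := by
        rw [tsum_mul_graphLaplacian hF, rev.tsum_eq F, two_mul]
    _ = ∑' e, (F e + F (rev e)) := (hF.tsum_add (rev.summable_iff.mpr hF)).symm
    _ = ∑' e : OrientedEdge Adj, (f e.val.1 - f e.val.2) * (g e.val.1 - g e.val.2) :=
        tsum_congr fun e => by
          change f e.val.1 * (g e.val.1 - g e.val.2) + f e.val.2 * (g e.val.2 - g e.val.1) = _
          ring

theorem picone_identity {a b : ℝ} (ha : a ≠ 0) (hb : b ≠ 0) (s t : ℝ) :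
    (s - t) ^ 2 = (s ^ 2 / a - t ^ 2 / b) * (a - b) + a * b * (s / a - t / b) ^ 2 := by
  field_simp
  ring

theorem ground_state_representation (hsymm : ∀ x y, Adj x y → Adj y x)
    (hlocfin : ∀ x, {y : X | Adj x y}.Finite) {u : X → ℝ} (hu : ∀ x, u x ≠ 0) {φ : X → ℝ}
    (hφ : (Function.support φ).Finite) :
    ∑' e : OrientedEdge Adj, (φ e.val.1 - φ e.val.2) ^ 2 =
      2 * ∑' x, graphLaplacian Adj u x / u x * φ x ^ 2 +
        ∑' e : OrientedEdge Adj,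
          u e.val.1 * u e.val.2 * (φ e.val.1 / u e.val.1 - φ e.val.2 / u e.val.2) ^ 2 := by
  let f : X → ℝ := fun x => φ x ^ 2 / u x
  have hf : (Function.support f).Finite :=
    hφ.subset fun x hx h0 => hx (by simp [f, h0])
  have hgreen : 2 * ∑' x, graphLaplacian Adj u x / u x * φ x ^ 2 =
      ∑' e : OrientedEdge Adj, (f e.val.1 - f e.val.2) * (u e.val.1 - u e.val.2) := by
    rw [← green_formula hsymm hlocfin hf]
    exact congrArg (2 * ·) (tsum_congr fun x => by ring)
  have hsum {F : OrientedEdge Adj → ℝ}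
      (hF : ∀ e, φ e.val.1 = 0 → φ e.val.2 = 0 → F e = 0) : Summable F :=
    summable_orientedEdge_of_finite_support hsymm hlocfin hφ hF
  rw [hgreen, ← Summable.tsum_add (hsum fun e h1 h2 => by simp [f, h1, h2])
    (hsum fun e h1 h2 => by simp [h1, h2])]
  exact tsum_congr fun e => picone_identity (hu e.val.1) (hu e.val.2) _ _

theorem hardy_inequality_of_pos (hsymm : ∀ x y, Adj x y → Adj y x)
    (hlocfin : ∀ x, {y : X | Adj x y}.Finite) {u : X → ℝ} (hu : ∀ x, 0 < u x) {φ : X → ℝ}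
    (hφ : (Function.support φ).Finite) :
    2 * ∑' x, graphLaplacian Adj u x / u x * φ x ^ 2 ≤
      ∑' e : OrientedEdge Adj, (φ e.val.1 - φ e.val.2) ^ 2 := by
  rw [ground_state_representation hsymm hlocfin (fun x => (hu x).ne') hφ]
  exact le_add_of_nonneg_right <| tsum_nonneg fun e =>
    mul_nonneg (mul_pos (hu e.val.1) (hu e.val.2)).le (sq_nonneg _)

end HardyInequality

section HardyWeight

variable {X : Type*} {Adj : X → X → Prop}

theorem gradientSq_nonneg (u : X → ℝ) (x : X) : 0 ≤ gradientSq Adj u x :=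
  tsum_nonneg fun _ => sq_nonneg _

theorem graphLaplacian_sq {x : X} (hx : {y : X | Adj x y}.Finite) (u : X → ℝ) :
    graphLaplacian Adj (fun y => u y ^ 2) x =
      2 * u x * graphLaplacian Adj u x - gradientSq Adj u x := by
  have : Finite {y : X // Adj x y} := hx.to_subtype
  unfold graphLaplacian gradientSq
  rw [← tsum_mul_left, ← Summable.tsum_sub .of_finite .of_finite]
  exact tsum_congr fun y => by ring

theorem hardyWeight_eq {G : X → ℝ} (hGpos : ∀ x, 0 < G x) {x : X}
    (hx : {y : X | Adj x y}.Finite) :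
    hardyWeight Adj G x =
      1 / (2 * G x) * (graphLaplacian Adj G x + gradientSq Adj (fun y => √(G y)) x) := by
  have hsq (y : X) : √(G y) ^ 2 = G y := Real.sq_sqrt (hGpos y).le
  have hsqrt : √(G x) ≠ 0 := (Real.sqrt_pos.mpr (hGpos x)).ne'
  have hsum : graphLaplacian Adj G x + gradientSq Adj (fun y => √(G y)) x =
      2 * √(G x) * graphLaplacian Adj (fun y => √(G y)) x := by
    have hproduct_rule := graphLaplacian_sq hx fun y => √(G y)
    simp only [hsq] at hproduct_rule
    linarith
  have hG : G x ≠ 0 := (hGpos x).ne'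
  rw [hardyWeight, hsum]
  field_simp
  rw [hsq]

theorem hardyWeight_nonneg {G : X → ℝ} (hGpos : ∀ x, 0 < G x) {x : X}
    (hx : {y : X | Adj x y}.Finite) (hsuper : 0 ≤ graphLaplacian Adj G x) :
    0 ≤ hardyWeight Adj G x := by
  rw [hardyWeight_eq hGpos hx]
  have hcoef : 0 ≤ 1 / (2 * G x) := (div_pos one_pos (mul_pos two_pos (hGpos x))).le
  exact mul_nonneg hcoef (add_nonneg hsuper (gradientSq_nonneg _ x))

theorem hardyWeight_eq_of_graphLaplacian_eq_zero {G : X → ℝ} (hGpos : ∀ x, 0 < G x) {x : X}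
    (hx : {y : X | Adj x y}.Finite) (hharm : graphLaplacian Adj G x = 0) :
    hardyWeight Adj G x = 1 / (2 * G x) * gradientSq Adj (fun y => √(G y)) x := by
  rw [hardyWeight_eq hGpos hx, hharm, zero_add]

end HardyWeight

/-- The factor `2` appears because every undirected edge is counted twice on the right. -/
theorem stmt1_general {X : Type*} {Adj : X → X → Prop}
    (hsymm : ∀ x y, Adj x y → Adj y x) (hlocfin : ∀ x, {y : X | Adj x y}.Finite)
    {G : X → ℝ} (hGpos : ∀ x, 0 < G x) :
    (∀ x, 0 ≤ graphLaplacian Adj G x → 0 ≤ hardyWeight Adj G x) ∧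
    (∀ φ : X → ℝ, (Function.support φ).Finite →
      2 * ∑' x, hardyWeight Adj G x * φ x ^ 2 ≤
        ∑' e : OrientedEdge Adj, (φ e.val.1 - φ e.val.2) ^ 2) ∧
    (∀ x, graphLaplacian Adj G x = 0 →
      hardyWeight Adj G x = 1 / (2 * G x) * gradientSq Adj (fun y => √(G y)) x) :=
  ⟨fun x => hardyWeight_nonneg hGpos (hlocfin x),
    fun _ => hardy_inequality_of_pos hsymm hlocfin fun x => Real.sqrt_pos.mpr (hGpos x),
    fun x => hardyWeight_eq_of_graphLaplacian_eq_zero hGpos (hlocfin x)⟩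

/-- Hardy inequality with optimal weight built from a proper positive
superharmonic function `G` (e.g. a Green function) on a graph with standard weights. -/
theorem stmt1 (X : Type) [Countable X] [Infinite X]
    (Adj : X → X → Prop)
    (hsymm : ∀ x y, Adj x y → Adj y x)
    (hirr : ∀ x, ¬ Adj x x)
    (hlocfin : ∀ x, {y : X | Adj x y}.Finite)
    (hdeg : ∃ D : ℕ, ∀ x, ({y : X | Adj x y}).ncard ≤ D)
    (hconn : ∀ x y : X, Relation.ReflTransGen Adj x y)
    (o : X) (G : X → ℝ)
    (hGpos : ∀ x, 0 < G x)
    (hGsuper : ∀ x, 0 ≤ ∑' y : {y : X // Adj x y}, (G x - G y.val))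
    (hGharm : ∀ x, x ≠ o → (∑' y : {y : X // Adj x y}, (G x - G y.val)) = 0)
    (hGproper : ∀ I : Set ℝ, IsCompact I → I ⊆ Set.range G → (G ⁻¹' I).Finite)
    (w : X → ℝ)
    (hw : ∀ x, w x =
      (∑' y : {y : X // Adj x y}, (Real.sqrt (G x) - Real.sqrt (G y.val))) /
        Real.sqrt (G x)) :
    (∀ x, 0 ≤ w x) ∧
    (∀ φ : X → ℝ, (Function.support φ).Finite →
      (∑' p : {p : X × X // Adj p.1 p.2}, (φ p.val.1 - φ p.val.2) ^ 2)
        ≥ ∑' x : X, w x * φ x ^ 2) ∧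
    (∀ x, x ≠ o → w x =
      (1 / (2 * G x)) *
        ∑' y : {y : X // Adj x y}, (Real.sqrt (G x) - Real.sqrt (G y.val)) ^ 2) := by
  obtain rfl : w = hardyWeight Adj G := funext hw
  obtain ⟨hnonneg, hardy, hgrad⟩ := stmt1_general hsymm hlocfin hGpos
  refine ⟨fun x => hnonneg x (hGsuper x), fun φ hφ => ?_, fun x hx => hgrad x (hGharm x hx)⟩
  have hpot : 0 ≤ ∑' x, hardyWeight Adj G x * φ x ^ 2 :=
    tsum_nonneg fun x => mul_nonneg (hnonneg x (hGsuper x)) (sq_nonneg _)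
  linarith [hardy φ hφ]
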